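/- The left ideal I_L^ν := Cl_N(q,c)·φ_N^ν is a minimal left ideal of Cl_N(q,c), and the set {γ_1^{i_1}γ_2^{i_2}⋯γ_n^{i_n} φ_N^ν : i_j ∈ {0,1}} is a vector space basis of I_L^ν; in particular dim I_L^ν = 2^n. -/

import Mathlib

noncomputable section

namespace FRT

/-- The "dual" index `i' = N+1-i` (0-indexed: `N-1-i`). -/
def dual {N : ℕ} (i : Fin N) : Fin N := ⟨N - 1 - i.val, by have := i.2; omega⟩

/-- Generators of the free algebra. -/
def gen {N : ℕ} (i : Fin N) : FreeAlgebra ℂ (Fin N) := FreeAlgebra.ι ℂ i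

/-- The sum `∑_{k<i} q^{2k-2i+2} γ_k γ_{k'}` appearing in the defining relations. -/
def pairSum (N : ℕ) (q : ℂ) (i : Fin N) : FreeAlgebra ℂ (Fin N) :=
  ∑ k ∈ Finset.Iio i, (q ^ (2 * (k.val : ℤ) - 2 * (i.val : ℤ) + 2)) • (gen k * gen (dual k))

/-- The defining relations of the FRT–Clifford algebra `Cl_N(q,c)`. -/
inductive Rel (N : ℕ) (q c : ℂ) : FreeAlgebra ℂ (Fin N) → FreeAlgebra ℂ (Fin N) → Prop
  | sq (i : Fin N) (h : 2 * i.val + 1 ≠ N) : Rel N q c (gen i * gen i) 0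
  | swap (i j : Fin N) (hlt : i < j) (h : i.val + j.val + 1 ≠ N) :
      Rel N q c (gen j * gen i) ((-(q ^ 2)) • (gen i * gen j))
  | pair (i : Fin N) (h : 2 * i.val + 1 < N) :
      Rel N q c (gen (dual i) * gen i)
        (-(gen i * gen (dual i)) + (q ^ 2 - q⁻¹ ^ 2) • pairSum N q i +
          algebraMap ℂ _ (c ^ 2 * q ^ ((N : ℤ) - 2 * (i.val : ℤ) - 1) * (q + q⁻¹)))
  | middle (i : Fin N) (h : 2 * i.val + 1 = N) :
      Rel N q c (gen i * gen i) ((q - q⁻¹) • pairSum N q i + algebraMap ℂ _ (c ^ 2))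

/-- The FRT–Clifford algebra `Cl_N(q,c)`. -/
abbrev Cl (N : ℕ) (q c : ℂ) := RingQuot (Rel N q c)

/-- The generators `γ_i` of `Cl_N(q,c)`. -/
def γ (N : ℕ) (q c : ℂ) (i : Fin N) : Cl N q c :=
  RingQuot.mkAlgHom ℂ (Rel N q c) (gen i)

/-- Ordered product `γ_1 γ_2 ⋯ γ_m` of the first `m` generators. -/
def prodFirst (N : ℕ) (q c : ℂ) (m : ℕ) : Cl N q c :=
  (((List.finRange N).take m).map (γ N q c)).prod

/-- Ordered product `γ_{m+1} γ_{m+2} ⋯ γ_N` (0-indexed: indices `m,…,N-1`). -/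
def prodFrom (N : ℕ) (q c : ℂ) (m : ℕ) : Cl N q c :=
  (((List.finRange N).drop m).map (γ N q c)).prod

/-- The ordered monomial `γ_1^{i_1} ⋯ γ_N^{i_N}` for `i ∈ {0,1}^N`. -/
def monoB (N : ℕ) (q c : ℂ) (f : Fin N → Bool) : Cl N q c :=
  ((List.finRange N).map (fun i => if f i then γ N q c i else 1)).prod

/-- The ordered monomial `γ_1^{i_1} ⋯ γ_n^{i_n}` for `i ∈ {0,1}^n`, `n ≤ N`. -/
def monoLow (N : ℕ) (q c : ℂ) {n : ℕ} (h : n ≤ N) (f : Fin n → Bool) : Cl N q c :=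
  ((List.finRange n).map (fun j => if f j then γ N q c (Fin.castLE h j) else 1)).prod

/-- `z` is homogeneous of `∂_i`-degree `0`: it is fixed by every algebra endomorphism
rescaling `γ_i` by `t` and `γ_{i'}` by `t⁻¹`. -/
def DegZeroAt (N : ℕ) (q c : ℂ) (i : ℕ) (z : Cl N q c) : Prop :=
  ∀ t : ℂ, t ≠ 0 → ∀ f : Cl N q c →ₐ[ℂ] Cl N q c,
    (∀ j : Fin N, f (γ N q c j) =
      (if j.val = i then t else if j.val + i + 1 = N then t⁻¹ else 1) • γ N q c j) →
    f z = z

open Finset Function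

section SpinModule

variable {n : ℕ}

/-- The scalar `s ^ #{k < i | f k}`. -/
def weight (s : ℂ) (f : Fin n → Bool) (i : ℕ) : ℂ :=
  ∏ k ∈ range i, if h : k < n then (if f ⟨k, h⟩ then s else 1) else 1

lemma weight_zero (s : ℂ) (f : Fin n → Bool) : weight s f 0 = 1 := by simp [weight]

lemma weight_succ (s : ℂ) (f : Fin n → Bool) (i : Fin n) :
    weight s f (i + 1) = weight s f i * if f i then s else 1 := by
  simp [weight, prod_range_succ]

lemma weight_ne_zero {s : ℂ} (hs : s ≠ 0) (f : Fin n → Bool) (i : ℕ) : weight s f i ≠ 0 := by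
  refine prod_ne_zero_iff.2 fun k _ => ?_
  split_ifs <;> simp [hs]

lemma weight_update_of_le (s : ℂ) (f : Fin n → Bool) (b : Bool) (j : Fin n) {i : ℕ}
    (h : i ≤ j) : weight s (update f j b) i = weight s f i := by
  refine prod_congr rfl fun k hk => ?_
  have hkj : ∀ hkn : k < n, (⟨k, hkn⟩ : Fin n) ≠ j := by
    rintro hkn rfl
    exact absurd (mem_range.1 hk) (by simpa using h)
  by_cases hkn : k < n <;> simp [hkn, update_of_ne (hkj _)]

lemma weight_update_true (s : ℂ) (f : Fin n → Bool) {j : Fin n} (hf : f j = false) {i : ℕ}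
    (h : (j : ℕ) < i) : weight s (update f j true) i = s * weight s f i := by
  unfold weight
  rw [← mul_prod_erase _ _ (mem_range.2 h), ← mul_prod_erase (range i) _ (mem_range.2 h)]
  simp only [Fin.is_lt, dite_true, Fin.eta, update_self, hf, if_true, Bool.false_eq_true, if_false,
    one_mul]
  congr 1
  refine prod_congr rfl fun k hk => ?_
  have hkj : ∀ hkn : k < n, (⟨k, hkn⟩ : Fin n) ≠ j := by
    rintro hkn rfl
    simp at hk
  by_cases hkn : k < n <;> simp [hkn, update_of_ne (hkj _)]

lemma weight_update_false (s : ℂ) (f : Fin n → Bool) {j : Fin n} (hf : f j = true) {i : ℕ}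
    (h : (j : ℕ) < i) : s * weight s (update f j false) i = weight s f i := by
  rw [← weight_update_true s (update f j false) (by simp) h]
  simp [← hf]

lemma weight_sq (s : ℂ) (f : Fin n → Bool) {i : ℕ} (hi : i ≤ n) :
    weight s f i ^ 2 = 1 + (s ^ 2 - 1) * ∑ k ∈ range i,
      if h : k < n then (if f ⟨k, h⟩ then weight s f k ^ 2 else 0) else 0 := by
  induction i with
  | zero => simp [weight_zero]
  | succ i ih =>
    rw [weight_succ s f ⟨i, hi⟩, sum_range_succ, mul_add, ← add_assoc, ← ih (by omega), mul_pow]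
    cases hf : f ⟨i, hi⟩ <;> simp [hf, Nat.lt_of_succ_le hi]
    ring

lemma weight_eq_list_prod (s : ℂ) (f : Fin n → Bool) {i : ℕ} (hi : i ≤ n) :
    (((List.finRange n).take i).map fun j => if f j then s else 1).prod = weight s f i := by
  induction i with
  | zero => simp [weight_zero]
  | succ i ih =>
    rw [weight_succ s f ⟨i, hi⟩, ← ih (by omega), List.take_add_one]
    simp [Nat.lt_of_succ_le hi]

/-- The operator turning on the `i`-th bit. -/
def creation (s : ℂ) (i : Fin n) : Module.End ℂ ((Fin n → Bool) → ℂ) where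
  toFun v f := if f i then weight s f i * v (update f i false) else 0
  map_add' u v := by ext f; cases h : f i <;> simp [h, mul_add]
  map_smul' a v := by ext f; cases h : f i <;> simp [h, mul_left_comm]

/-- The operator turning off the `i`-th bit. -/
def annihilation (s : ℂ) (i : Fin n) : Module.End ℂ ((Fin n → Bool) → ℂ) where
  toFun v f := if f i then 0 else weight s f i * v (update f i true)
  map_add' u v := by ext f; cases h : f i <;> simp [h, mul_add]
  map_smul' a v := by ext f; cases h : f i <;> simp [h, mul_left_comm]

/-- The diagonal operator with eigenvalues `s ^ #{k | f k}`. -/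
def twist (s : ℂ) : Module.End ℂ ((Fin n → Bool) → ℂ) where
  toFun v f := weight s f n * v f
  map_add' u v := by ext f; simp [mul_add]
  map_smul' a v := by ext f; simp [mul_left_comm]

lemma creation_apply (s : ℂ) (i : Fin n) (v : (Fin n → Bool) → ℂ) (f : Fin n → Bool) :
    creation s i v f = if f i then weight s f i * v (update f i false) else 0 := rfl

lemma annihilation_apply (s : ℂ) (i : Fin n) (v : (Fin n → Bool) → ℂ) (f : Fin n → Bool) :
    annihilation s i v f = if f i then 0 else weight s f i * v (update f i true) := rfl

lemma twist_apply (s : ℂ) (v : (Fin n → Bool) → ℂ) (f : Fin n → Bool) :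
    twist s v f = weight s f n * v f := rfl

lemma creation_mul_self (s : ℂ) (i : Fin n) : creation s i * creation s i = 0 := by
  ext1 v; ext f; simp [creation_apply]

lemma annihilation_mul_self (s : ℂ) (i : Fin n) : annihilation s i * annihilation s i = 0 := by
  ext1 v; ext f; simp [annihilation_apply]

lemma creation_mul_creation (s : ℂ) {i j : Fin n} (h : i < j) :
    creation s j * creation s i = s • (creation s i * creation s j) := by
  ext1 v; ext f
  cases hi : f i <;> cases hj : f j <;>
    simp [creation_apply, hi, hj, update_of_ne h.ne, update_of_ne h.ne']
  rw [weight_update_of_le _ _ _ _ (by exact_mod_cast h.le), update_comm h.ne',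
    ← weight_update_false s f hi (by exact_mod_cast h)]
  ring

lemma annihilation_mul_annihilation (s : ℂ) {i j : Fin n} (h : i < j) :
    annihilation s i * annihilation s j = s • (annihilation s j * annihilation s i) := by
  ext1 v; ext f
  cases hi : f i <;> cases hj : f j <;>
    simp [annihilation_apply, hi, hj, update_of_ne h.ne, update_of_ne h.ne']
  rw [weight_update_of_le s f true j (by exact_mod_cast h.le), update_comm h.ne',
    weight_update_true s f hi (by exact_mod_cast h)]
  ring

lemma annihilation_mul_creation (s : ℂ) {i j : Fin n} (h : i ≠ j) :
    annihilation s j * creation s i = s • (creation s i * annihilation s j) := by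
  ext1 v; ext f
  cases hi : f i <;> cases hj : f j <;>
    simp [annihilation_apply, creation_apply, hi, hj, update_of_ne h, update_of_ne h.symm]
  rw [update_comm h.symm]
  rcases lt_or_gt_of_ne h with h | h
  · rw [weight_update_of_le _ _ _ _ (by exact_mod_cast h.le),
      ← weight_update_false s f hi (by exact_mod_cast h)]
    ring
  · rw [weight_update_of_le s f false i (by exact_mod_cast h.le),
      weight_update_true s f hj (by exact_mod_cast h)]
    ring

lemma twist_mul_creation (s : ℂ) (i : Fin n) :
    twist s * creation s i = s • (creation s i * twist s) := by
  ext1 v; ext f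
  cases hi : f i <;> simp [creation_apply, twist_apply, hi]
  rw [← weight_update_false s f hi i.2]
  ring

lemma annihilation_mul_twist (s : ℂ) (i : Fin n) :
    annihilation s i * twist s = s • (twist s * annihilation s i) := by
  ext1 v; ext f
  cases hi : f i <;> simp [annihilation_apply, twist_apply, hi]
  rw [weight_update_true s f hi i.2]
  ring

lemma creation_mul_annihilation_apply (s : ℂ) (i : Fin n) (v : (Fin n → Bool) → ℂ)
    (f : Fin n → Bool) :
    creation s i (annihilation s i v) f = (if f i then weight s f i ^ 2 else 0) * v f := by
  cases hi : f i <;>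
    simp [annihilation_apply, creation_apply, hi, weight_update_of_le _ _ _ _ le_rfl]
  rw [← hi, update_eq_self]
  ring

lemma annihilation_mul_creation_apply (s : ℂ) (i : Fin n) (v : (Fin n → Bool) → ℂ)
    (f : Fin n → Bool) :
    annihilation s i (creation s i v) f = (if f i then 0 else weight s f i ^ 2) * v f := by
  cases hi : f i <;>
    simp [annihilation_apply, creation_apply, hi, weight_update_of_le _ _ _ _ le_rfl]
  rw [← hi, update_eq_self]
  ring

/-- A nonzero subspace stable under all annihilation operators contains the vacuum vector. -/
lemma single_mem_of_annihilation_mem {s : ℂ} (hs : s ≠ 0)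
    (W : Submodule ℂ ((Fin n → Bool) → ℂ)) (hW : ∀ i, ∀ v ∈ W, annihilation s i v ∈ W)
    (hne : W ≠ ⊥) : Pi.single (fun _ => false) 1 ∈ W := by
  have key : ∀ k ≤ n, ∃ v ∈ W, v ≠ 0 ∧
      ∀ f : Fin n → Bool, (∃ j : Fin n, (j : ℕ) < k ∧ f j = true) → v f = 0 := by
    intro k hk
    induction k with
    | zero =>
      obtain ⟨v, hv, hv0⟩ := W.exists_mem_ne_zero_of_ne_bot hne
      exact ⟨v, hv, hv0, by simp⟩
    | succ k ih =>
      obtain ⟨v, hv, hv0, hvf⟩ := ih (by omega)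
      set i : Fin n := ⟨k, hk⟩ with hi
      by_cases h0 : annihilation s i v = 0
      · refine ⟨v, hv, hv0, ?_⟩
        rintro f ⟨j, hj, hfj⟩
        rcases Nat.lt_succ_iff_lt_or_eq.1 hj with hj | hj
        · exact hvf f ⟨j, hj, hfj⟩
        · obtain rfl : j = i := Fin.ext hj
          have := congrFun h0 (update f i false)
          simpa [annihilation_apply, weight_ne_zero hs, ← hfj] using this
      · refine ⟨_, hW i v hv, h0, ?_⟩
        rintro f ⟨j, hj, hfj⟩
        rw [annihilation_apply]
        cases hfi : f i
        · have hji : j ≠ i := by rintro rfl; simp [hfi] at hfj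
          have hjk : (j : ℕ) ≠ k := fun h => hji (Fin.ext h)
          simp [hvf (update f i true) ⟨j, by omega, by simp [update_of_ne hji, hfj]⟩]
        · simp
  obtain ⟨v, hv, hv0, hvf⟩ := key n le_rfl
  have hsupp : ∀ f ≠ (fun _ => false), v f = 0 := by
    intro f hf
    obtain ⟨j, hj⟩ := Function.ne_iff.1 hf
    exact hvf f ⟨j, j.2, by simpa using hj⟩
  have hv1 : v (fun _ => false) ≠ 0 := fun h =>
    hv0 (funext fun f => if hf : f = _ then hf ▸ h else hsupp f hf)
  convert W.smul_mem (v fun _ => false)⁻¹ hv using 1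
  ext f
  by_cases hf : f = fun _ => false
  · subst hf; simp [hv1]
  · simp [hsupp f hf, hf]

end SpinModule

section Representation

variable {N : ℕ} {q c : ℂ}

/-- The constant term of `γ_{i'} γ_i + γ_i γ_{i'}`. -/
def pairConst (N : ℕ) (q c : ℂ) (i : ℕ) : ℂ :=
  c ^ 2 * q ^ ((N : ℤ) - 2 * (i : ℤ) - 1) * (q + q⁻¹)

lemma add_inv_ne_zero_of_pow_four_ne_one (hq : q ≠ 0) (hq4 : q ^ 4 ≠ 1) : q + q⁻¹ ≠ 0 := by
  intro h
  have h2 : q ^ 2 = -1 := by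
    have : q * (q + q⁻¹) = 0 := by rw [h, mul_zero]
    rw [mul_add, mul_inv_cancel₀ hq] at this
    linear_combination this
  exact hq4 (by linear_combination (q ^ 2 - 1) * h2)

lemma pairConst_ne_zero (hq : q ≠ 0) (hqq : q + q⁻¹ ≠ 0) (hc : c ≠ 0) (i : ℕ) :
    pairConst N q c i ≠ 0 :=
  mul_ne_zero (mul_ne_zero (pow_ne_zero _ hc) (zpow_ne_zero _ hq)) hqq

lemma pairConst_eq (hq : q ≠ 0) (k i : ℕ) :
    pairConst N q c k = pairConst N q c i * q ^ (2 * (i : ℤ) - 2 * k) := by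
  have : (N : ℤ) - 2 * k - 1 = ((N : ℤ) - 2 * i - 1) + (2 * i - 2 * k) := by ring
  rw [pairConst, pairConst, this, zpow_add₀ hq]
  ring

/-- The action of the generators of `Cl_N(q,c)` on the spin module. -/
def spinGen (n N : ℕ) (q c μ : ℂ) (j : Fin N) : Module.End ℂ ((Fin n → Bool) → ℂ) :=
  if h : (j : ℕ) < n then creation (-q ^ 2) ⟨j, h⟩
  else if h : N - 1 - j < n then pairConst N q c (N - 1 - j) • annihilation (-q ^ 2) ⟨N - 1 - j, h⟩
  else μ • twist (-q ^ 2)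

variable {n : ℕ}

lemma spinGen_low (μ : ℂ) {j : Fin N} (h : (j : ℕ) < n) :
    spinGen n N q c μ j = creation (-q ^ 2) ⟨j, h⟩ := by simp [spinGen, h]

lemma spinGen_high (hN : 2 * n ≤ N) (μ : ℂ) {j : Fin N} (h : N - 1 - j < n) :
    spinGen n N q c μ j =
      pairConst N q c (N - 1 - j) • annihilation (-q ^ 2) ⟨N - 1 - j, h⟩ := by
  have := j.2
  simp [spinGen, h, show ¬ (j : ℕ) < n by omega]

lemma spinGen_dual (hN : 2 * n ≤ N) (μ : ℂ) {j : Fin N} (h : (j : ℕ) < n) :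
    spinGen n N q c μ (dual j) = pairConst N q c j • annihilation (-q ^ 2) ⟨j, h⟩ := by
  have h1 : N - 1 - (dual j : Fin N).val = j.val := by have := j.2; simp only [dual]; omega
  rw [spinGen_high hN μ (by omega)]
  simp only [h1]

lemma spinGen_middle (μ : ℂ) {j : Fin N} (h : ¬ (j : ℕ) < n) (h' : ¬ N - 1 - j < n) :
    spinGen n N q c μ j = μ • twist (-q ^ 2) := by
  simp [spinGen, h, h']

lemma spinGen_swap (hN : 2 * n ≤ N) (hN' : N ≤ 2 * n + 1) (μ : ℂ) {i j : Fin N} (hlt : i < j)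
    (h : i.val + j.val + 1 ≠ N) :
    spinGen n N q c μ j * spinGen n N q c μ i =
      (-(q ^ 2)) • (spinGen n N q c μ i * spinGen n N q c μ j) := by
  have hi := i.2
  have hj := j.2
  have hlt' : (i : ℕ) < j := hlt
  by_cases hin : (i : ℕ) < n
  · by_cases hjn : (j : ℕ) < n
    · rw [spinGen_low μ hin, spinGen_low μ hjn]
      exact creation_mul_creation _ hlt
    · by_cases hjn' : N - 1 - j < n
      · rw [spinGen_low μ hin, spinGen_high hN μ hjn', smul_mul_assoc, mul_smul_comm,
          annihilation_mul_creation, smul_comm]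
        simp only [ne_eq, Fin.mk.injEq]
        omega
      · rw [spinGen_low μ hin, spinGen_middle μ hjn hjn', smul_mul_assoc, mul_smul_comm,
          twist_mul_creation, smul_comm]
  · have hjn' : N - 1 - j < n := by omega
    by_cases hin' : N - 1 - i < n
    · rw [spinGen_high hN μ hjn', spinGen_high hN μ hin', smul_mul_assoc, mul_smul_comm,
        smul_mul_assoc, mul_smul_comm, annihilation_mul_annihilation]
      · rw [smul_comm (-q ^ 2), smul_comm (-q ^ 2), smul_comm (pairConst N q c (N - 1 - j))]
      · simp only [Fin.mk_lt_mk]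
        omega
    · rw [spinGen_high hN μ hjn', spinGen_middle μ hin hin', smul_mul_assoc, mul_smul_comm,
        smul_mul_assoc, mul_smul_comm, annihilation_mul_twist]
      rw [smul_comm (-q ^ 2), smul_comm (-q ^ 2), smul_comm (pairConst N q c (N - 1 - j))]

lemma spinGen_pairSum (hN : 2 * n ≤ N) (hq : q ≠ 0) (μ : ℂ) (i : Fin N) (hi : (i : ℕ) ≤ n)
    (v : (Fin n → Bool) → ℂ) (f : Fin n → Bool) :
    (q ^ 2 - q⁻¹ ^ 2) * (∑ k ∈ Iio i, (q ^ (2 * (k.val : ℤ) - 2 * (i.val : ℤ) + 2)) •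
      (spinGen n N q c μ k * spinGen n N q c μ (dual k))) v f =
      pairConst N q c i * (weight (-q ^ 2) f i ^ 2 - 1) * v f := by
  have key : ∀ k ∈ Iio i, ((q ^ (2 * (k.val : ℤ) - 2 * (i.val : ℤ) + 2)) •
      (spinGen n N q c μ k * spinGen n N q c μ (dual k))) v f =
      pairConst N q c i * q ^ 2 * v f * (if h : k.val < n then
        (if f ⟨k.val, h⟩ then weight (-q ^ 2) f k.val ^ 2 else 0) else 0) := by
    intro k hk
    have hki : (k : ℕ) < i := by simpa using hk
    have hkn : (k : ℕ) < n := by omega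
    rw [spinGen_low μ hkn, spinGen_dual hN μ hkn, mul_smul_comm, smul_smul, dif_pos hkn]
    simp only [LinearMap.smul_apply, Module.End.mul_apply, Pi.smul_apply,
      creation_mul_annihilation_apply, smul_eq_mul]
    rw [pairConst_eq hq k i]
    have h2 : q ^ (2 * (k.val : ℤ) - 2 * (i.val : ℤ) + 2) * q ^ (2 * (i.val : ℤ) - 2 * k.val)
        = q ^ 2 := by
      rw [← zpow_add₀ hq]
      have : (2 * (k.val : ℤ) - 2 * (i.val : ℤ) + 2) + (2 * (i.val : ℤ) - 2 * k.val) = 2 := by ring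
      rw [this]; norm_cast
    rw [← h2]
    ring
  have hsum : (∑ k ∈ Iio i, pairConst N q c i * q ^ 2 * v f * (if h : k.val < n then
        (if f ⟨k.val, h⟩ then weight (-q ^ 2) f k.val ^ 2 else 0) else 0)) =
      pairConst N q c i * q ^ 2 * v f * ∑ k ∈ range i, (if h : k < n then
        (if f ⟨k, h⟩ then weight (-q ^ 2) f k ^ 2 else 0) else 0) := by
    rw [← mul_sum, ← Nat.Iio_eq_range, ← Fin.map_valEmbedding_Iio, sum_map]
    rfl
  rw [LinearMap.sum_apply, Finset.sum_apply, sum_congr rfl key, hsum, weight_sq _ f hi]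
  have : (q ^ 2 - q⁻¹ ^ 2) * q ^ 2 = (-q ^ 2) ^ 2 - 1 := by field_simp
  linear_combination (pairConst N q c i * v f * ∑ k ∈ range i, (if h : k < n then
        (if f ⟨k, h⟩ then weight (-q ^ 2) f k ^ 2 else 0) else 0)) * this

/-- The spin representation of `Cl_N(q,c)`. -/
lemma exists_spinRep (hN : 2 * n ≤ N) (hN' : N ≤ 2 * n + 1) (hq : q ≠ 0)
    (hqq : q + q⁻¹ ≠ 0) {μ : ℂ} (hμ : μ ^ 2 = c ^ 2) :
    ∃ ρ : Cl N q c →ₐ[ℂ] Module.End ℂ ((Fin n → Bool) → ℂ),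
      ∀ j, ρ (γ N q c j) = spinGen n N q c μ j := by
  let F : FreeAlgebra ℂ (Fin N) →ₐ[ℂ] Module.End ℂ ((Fin n → Bool) → ℂ) :=
    FreeAlgebra.lift ℂ (spinGen n N q c μ)
  have hF : ∀ j, F (gen j) = spinGen n N q c μ j := fun j => by simp [F, gen]
  have hS : ∀ i, F (pairSum N q i) = ∑ k ∈ Iio i, (q ^ (2 * (k.val : ℤ) - 2 * (i.val : ℤ) + 2)) •
      (spinGen n N q c μ k * spinGen n N q c μ (dual k)) := fun i => by
    simp [pairSum, hF]
  have hrel : ∀ ⦃x y⦄, Rel N q c x y → F x = F y := by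
    intro x y h
    induction h with
    | sq i h =>
      have := i.2
      rw [map_mul, map_zero, hF]
      by_cases hin : (i : ℕ) < n
      · rw [spinGen_low μ hin, creation_mul_self]
      · rw [spinGen_high hN μ (by omega), smul_mul_assoc, mul_smul_comm, annihilation_mul_self]
        simp
    | swap i j hlt h =>
      rw [map_mul, map_smul, map_mul, hF, hF]
      exact spinGen_swap hN hN' μ hlt h
    | pair i h =>
      have hin : (i : ℕ) < n := by omega
      rw [map_mul, map_add, map_add, map_neg, map_mul, map_smul, hS, hF, hF, AlgHom.commutes]
      refine LinearMap.ext fun v => funext fun f => ?_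
      have h1 := spinGen_pairSum (c := c) hN hq μ i hin.le v f
      simp only [LinearMap.add_apply, Pi.add_apply, LinearMap.neg_apply, Pi.neg_apply,
        LinearMap.smul_apply, Pi.smul_apply, smul_eq_mul, h1]
      rw [spinGen_low μ hin, spinGen_dual hN μ hin]
      simp only [smul_mul_assoc, mul_smul_comm, LinearMap.smul_apply, Pi.smul_apply, smul_eq_mul,
        Module.End.mul_apply, creation_mul_annihilation_apply, annihilation_mul_creation_apply,
        Module.algebraMap_end_apply]
      rw [← pairConst]
      cases f ⟨i, hin⟩ <;> simp <;> ring
    | middle i h =>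
      have hin : ¬ (i : ℕ) < n := by omega
      have hi : (i : ℕ) = n := by omega
      rw [map_mul, map_add, map_smul, hS, hF, AlgHom.commutes]
      refine LinearMap.ext fun v => funext fun f => ?_
      have h1 := spinGen_pairSum (c := c) hN hq μ i hi.le v f
      rw [spinGen_middle μ hin (by omega)]
      have hP : pairConst N q c i = c ^ 2 * (q + q⁻¹) := by
        rw [pairConst, show (N : ℤ) - 2 * (i : ℕ) - 1 = 0 by omega]
        simp
      rw [hP] at h1
      have h2 : q ^ 2 - q⁻¹ ^ 2 = (q - q⁻¹) * (q + q⁻¹) := by ring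
      rw [h2] at h1
      simp only [LinearMap.add_apply, Pi.add_apply, LinearMap.smul_apply, Pi.smul_apply,
        smul_eq_mul, smul_mul_assoc, mul_smul_comm, Module.End.mul_apply, twist_apply,
        Module.algebraMap_end_apply]
      refine mul_left_cancel₀ hqq ?_
      have hw : weight (-q ^ 2) f i = weight (-q ^ 2) f n := by rw [hi]
      rw [hw] at h1
      linear_combination (q + q⁻¹) * weight (-q ^ 2) f n ^ 2 * v f * hμ - h1
  refine ⟨RingQuot.liftAlgHom ℂ ⟨F, hrel⟩, fun j => ?_⟩
  rw [γ, RingQuot.liftAlgHom_mkAlgHom_apply, hF]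

end Representation

section Relations

variable {N : ℕ} {q c : ℂ}

lemma dual_dual (i : Fin N) : dual (dual i) = i := by
  have := i.2
  ext
  simp only [dual]
  omega

lemma γ_mul_self {i : Fin N} (h : 2 * i.val + 1 ≠ N) : γ N q c i * γ N q c i = 0 := by
  simpa [γ] using RingQuot.mkAlgHom_rel ℂ (Rel.sq (q := q) (c := c) i h)

lemma γ_swap {i j : Fin N} (hlt : i < j) (h : i.val + j.val + 1 ≠ N) :
    γ N q c j * γ N q c i = (-(q ^ 2)) • (γ N q c i * γ N q c j) := by
  have := RingQuot.mkAlgHom_rel ℂ (Rel.swap (q := q) (c := c) i j hlt h)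
  rwa [map_mul, map_smul, map_mul] at this

lemma mkAlgHom_pairSum (i : Fin N) : RingQuot.mkAlgHom ℂ (Rel N q c) (pairSum N q i) =
    ∑ k ∈ Iio i, (q ^ (2 * (k.val : ℤ) - 2 * (i.val : ℤ) + 2)) •
      (γ N q c k * γ N q c (dual k)) := by
  simp [pairSum, γ]

lemma γ_pair {i : Fin N} (h : 2 * i.val + 1 < N) :
    γ N q c (dual i) * γ N q c i = (-1 : ℂ) • (γ N q c i * γ N q c (dual i)) +
      (q ^ 2 - q⁻¹ ^ 2) • ∑ k ∈ Iio i, (q ^ (2 * (k.val : ℤ) - 2 * (i.val : ℤ) + 2)) •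
        (γ N q c k * γ N q c (dual k)) + algebraMap ℂ _ (pairConst N q c i) := by
  have := RingQuot.mkAlgHom_rel ℂ (Rel.pair (q := q) (c := c) i h)
  rw [← neg_one_smul ℂ, map_mul, map_add, map_add, map_smul, map_mul, map_smul, mkAlgHom_pairSum,
    AlgHom.commutes] at this
  exact this

lemma γ_middle {i : Fin N} (h : 2 * i.val + 1 = N) :
    γ N q c i * γ N q c i =
      (q - q⁻¹) • ∑ k ∈ Iio i, (q ^ (2 * (k.val : ℤ) - 2 * (i.val : ℤ) + 2)) •
        (γ N q c k * γ N q c (dual k)) + algebraMap ℂ _ (c ^ 2) := by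
  have := RingQuot.mkAlgHom_rel ℂ (Rel.middle (q := q) (c := c) i h)
  rw [map_mul, map_add, map_smul, mkAlgHom_pairSum, AlgHom.commutes] at this
  exact this

lemma exists_γ_mul_γ_eq_smul (hq : q ≠ 0) {i j : Fin N} (hij : i ≠ j)
    (h : i.val + j.val + 1 ≠ N) :
    ∃ a : ℂ, γ N q c i * γ N q c j = a • (γ N q c j * γ N q c i) := by
  rcases lt_or_gt_of_ne hij with hlt | hlt
  · exact ⟨(-(q ^ 2))⁻¹, by rw [γ_swap hlt h, inv_smul_smul₀ (by simp [hq])]⟩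
  · exact ⟨_, γ_swap hlt (by omega)⟩

lemma γ_mul_prod_eq_zero (hq : q ≠ 0) {i : Fin N} (hi : 2 * i.val + 1 ≠ N) (l : List (Fin N))
    (hl : ∀ j ∈ l, i.val + j.val + 1 ≠ N) (hil : i ∈ l) :
    γ N q c i * (l.map (γ N q c)).prod = 0 := by
  induction l with
  | nil => simp at hil
  | cons j l ih =>
    rw [List.map_cons, List.prod_cons, ← mul_assoc]
    by_cases hij : i = j
    · rw [← hij, γ_mul_self hi, zero_mul]
    · obtain ⟨a, ha⟩ := exists_γ_mul_γ_eq_smul (c := c) hq hij (hl j (by simp))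
      rw [ha, smul_mul_assoc, mul_assoc,
        ih (fun k hk => hl k (List.mem_cons_of_mem _ hk))
          ((List.mem_cons.1 hil).resolve_left hij), mul_zero, smul_zero]

lemma mem_drop_finRange {m : ℕ} {j : Fin N} : j ∈ (List.finRange N).drop m ↔ m ≤ j := by
  rw [List.mem_drop_iff_getElem]
  constructor
  · rintro ⟨i, hi, rfl⟩
    simp
  · intro h
    have := j.2
    exact ⟨j - m, by simp; omega, by ext; simp; omega⟩

lemma mem_take_finRange {m : ℕ} {j : Fin N} : j ∈ (List.finRange N).take m ↔ (j : ℕ) < m := by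
  rw [List.mem_take_iff_getElem]
  constructor
  · rintro ⟨i, hi, rfl⟩
    simp at hi ⊢
    omega
  · intro h
    exact ⟨j, by simp [h], by simp⟩

lemma γ_mul_prodFrom_eq_zero (hq : q ≠ 0) {m : ℕ} (hm : N ≤ 2 * m) {i : Fin N} (hi : m ≤ i) :
    γ N q c i * prodFrom N q c m = 0 := by
  refine γ_mul_prod_eq_zero hq (by omega) _ (fun j hj => ?_) (mem_drop_finRange.2 hi)
  have := mem_drop_finRange.1 hj
  omega

end Relations

section Spinor

variable {N n : ℕ} {q c : ℂ}

/-- The ordered product of those `γ_j`, `j ∈ l`, with `f j = true`. -/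
def selProd (q c : ℂ) (h : n ≤ N) (l : List (Fin n)) (f : Fin n → Bool) : Cl N q c :=
  (l.map fun j => if f j then γ N q c (Fin.castLE h j) else 1).prod

lemma selProd_congr (h : n ≤ N) {l : List (Fin n)} {f g : Fin n → Bool}
    (hfg : ∀ j ∈ l, f j = g j) : selProd q c h l f = selProd q c h l g := by
  unfold selProd
  congr 1
  exact List.map_congr_left fun j hj => by rw [hfg j hj]

lemma mul_selProd (h : n ≤ N) (x : Cl N q c) (s : ℂ) (l : List (Fin n)) (f : Fin n → Bool)
    (hx : ∀ j ∈ l, x * γ N q c (Fin.castLE h j) = s • (γ N q c (Fin.castLE h j) * x)) :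
    x * selProd q c h l f =
      (l.map fun j => if f j then s else 1).prod • (selProd q c h l f * x) := by
  unfold selProd
  induction l with
  | nil => simp
  | cons j l ih =>
    have ih := ih fun k hk => hx k (List.mem_cons_of_mem _ hk)
    simp only [List.map_cons, List.prod_cons]
    cases f j
    · simp [ih]
    · simp only [if_true]
      rw [← mul_assoc, hx j (by simp), smul_mul_assoc, mul_assoc, ih, mul_smul_comm, smul_smul,
        mul_assoc]

lemma finRange_eq_take_append (i : Fin n) :
    List.finRange n = (List.finRange n).take i ++ i :: (List.finRange n).drop (i + 1) := by
  conv_lhs => rw [← List.take_append_drop i (List.finRange n)]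
  rw [List.drop_eq_getElem_cons (by simp)]
  simp

lemma monoLow_eq (h : n ≤ N) (i : Fin n) (f : Fin n → Bool) :
    monoLow N q c h f = selProd q c h ((List.finRange n).take i) f *
      ((if f i then γ N q c (Fin.castLE h i) else 1) *
        selProd q c h ((List.finRange n).drop (i + 1)) f) := by
  conv_lhs => rw [monoLow, finRange_eq_take_append i]
  rw [List.map_append, List.prod_append, List.map_cons, List.prod_cons]
  rfl

lemma monoLow_update (h : n ≤ N) (i : Fin n) (f : Fin n → Bool) (b : Bool) :
    monoLow N q c h (update f i b) = selProd q c h ((List.finRange n).take i) f *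
      ((if b then γ N q c (Fin.castLE h i) else 1) *
        selProd q c h ((List.finRange n).drop (i + 1)) f) := by
  rw [monoLow_eq h i, update_self]
  congr 1
  · refine selProd_congr h fun j hj => update_of_ne ?_ _ _
    rintro rfl
    simp [mem_take_finRange] at hj
  · congr 1
    refine selProd_congr h fun j hj => update_of_ne ?_ _ _
    rintro rfl
    simp [mem_drop_finRange] at hj

lemma mul_monoLow (h : n ≤ N) (x : Cl N q c) (i : Fin n) (f : Fin n → Bool)
    (hx : ∀ j < i, x * γ N q c (Fin.castLE h j) =
      (-q ^ 2) • (γ N q c (Fin.castLE h j) * x)) :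
    x * monoLow N q c h f = weight (-q ^ 2) f i •
      (selProd q c h ((List.finRange n).take i) f *
      (x * ((if f i then γ N q c (Fin.castLE h i) else 1) *
        selProd q c h ((List.finRange n).drop (i + 1)) f))) := by
  rw [monoLow_eq h i, ← mul_assoc, mul_selProd h x (-q ^ 2) _ _
    (fun j hj => hx j (by simpa [mem_take_finRange] using hj)), smul_mul_assoc, mul_assoc,
    weight_eq_list_prod _ _ i.2.le]

variable {φ : Cl N q c}

lemma γ_low_mul_monoLow (hN : 2 * n ≤ N) (h : n ≤ N) (i : Fin n) (f : Fin n → Bool) :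
    γ N q c (Fin.castLE h i) * monoLow N q c h f =
      if f i then 0 else weight (-q ^ 2) f i • monoLow N q c h (update f i true) := by
  have := i.2
  rw [mul_monoLow h _ i f fun j hj => γ_swap (by simpa using hj) (by simp; omega), monoLow_update]
  cases hf : f i
  · simp
  · simp only [if_true]
    rw [← mul_assoc (γ N q c _), γ_mul_self (by simp; omega)]
    simp

lemma γ_dual_mul_selProd_mul (hN : 2 * n ≤ N) (h : n ≤ N)
    (hφ : ∀ k : Fin N, (k : ℕ) < n → γ N q c (dual k) * φ = 0) (k : Fin N) (hk : (k : ℕ) < n)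
    (l : List (Fin n)) (hl : ∀ j ∈ l, (k : ℕ) < j) (f : Fin n → Bool) :
    γ N q c (dual k) * (selProd q c h l f * φ) = 0 := by
  rw [← mul_assoc, mul_selProd h _ (-q ^ 2), smul_mul_assoc, mul_assoc, hφ k hk]
  · simp
  · intro j hj
    have := hl j hj
    have := j.2
    refine γ_swap ?_ ?_
    · rw [Fin.lt_def]; simp [dual]; omega
    · simp [dual]; omega

lemma γ_dual_mul_monoLow_mul (hN : 2 * n ≤ N) (h : n ≤ N)
    (hφ : ∀ k : Fin N, (k : ℕ) < n → γ N q c (dual k) * φ = 0) (i : Fin n) (f : Fin n → Bool) :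
    γ N q c (dual (Fin.castLE h i)) * (monoLow N q c h f * φ) =
      if f i then pairConst N q c i • weight (-q ^ 2) f i •
        (monoLow N q c h (update f i false) * φ) else 0 := by
  have hi := i.2
  have h0 : ∀ k : Fin N, (k : ℕ) ≤ i → γ N q c (dual k) *
      (selProd q c h ((List.finRange n).drop (i + 1)) f * φ) = 0 := fun k hk =>
    γ_dual_mul_selProd_mul hN h hφ k (by omega) _
      (fun j hj => by have := mem_drop_finRange.1 hj; omega) f
  rw [← mul_assoc, mul_monoLow h _ i f, monoLow_update]
  · cases hf : f i
    · simp [mul_assoc, h0 (Fin.castLE h i) le_rfl]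
    · simp only [if_true, Bool.false_eq_true, if_false, one_mul]
      rw [← mul_assoc (γ N q c _), γ_pair (by simp; omega), smul_mul_assoc, mul_assoc,
        mul_assoc _ _ φ, add_mul, add_mul, smul_mul_assoc, mul_assoc (γ N q c _), h0 _ (by simp),
        smul_mul_assoc, sum_mul, sum_eq_zero, Algebra.algebraMap_eq_smul_one]
      · simp only [mul_zero, smul_zero, add_zero, zero_add, smul_mul_assoc, one_mul,
          mul_smul_comm, mul_assoc, Fin.val_castLE]
        rw [smul_comm]
      · intro k hk
        have hk' : (k : ℕ) < i := by simpa [Fin.lt_def] using hk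
        rw [smul_mul_assoc, mul_assoc, h0 k hk'.le, mul_zero, smul_zero]
  · intro j hj
    have hj' : (j : ℕ) < i := hj
    refine γ_swap ?_ ?_
    · rw [Fin.lt_def]; simp [dual]; omega
    · simp [dual]; omega

lemma γ_middle_mul_monoLow_mul (h : n ≤ N) {m : Fin N} (hm : (m : ℕ) = n) (hmN : 2 * n + 1 = N)
    {μ : ℂ} (hφ : γ N q c m * φ = μ • φ) (f : Fin n → Bool) :
    γ N q c m * (monoLow N q c h f * φ) =
      (μ * weight (-q ^ 2) f n) • (monoLow N q c h f * φ) := by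
  have h1 : monoLow N q c h f = selProd q c h ((List.finRange n).take n) f := by
    rw [List.take_of_length_le (by simp)]; rfl
  rw [h1, ← mul_assoc, mul_selProd h _ (-q ^ 2), weight_eq_list_prod _ _ le_rfl, smul_mul_assoc,
    mul_assoc, hφ, mul_smul_comm, smul_smul, mul_comm]
  intro j _
  have := j.2
  refine γ_swap ?_ ?_
  · rw [Fin.lt_def]; simp; omega
  · simp; omega

end Spinor

section Vacuum

variable {N n : ℕ} {q c : ℂ} {φ : Cl N q c}

lemma sum_update_not {M : Type*} [AddCommMonoid M] (i : Fin n) (g : (Fin n → Bool) → M) :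
    ∑ f, g (update f i (!f i)) = ∑ f, g f :=
  Equiv.sum_comp (Function.Involutive.toPerm (fun f : Fin n → Bool => update f i (!f i))
    (fun f => by simp)) g

/-- The linear map from the spin module to the left ideal generated by `φ`. -/
def spinMap (h : n ≤ N) (φ : Cl N q c) : ((Fin n → Bool) → ℂ) →ₗ[ℂ] Cl N q c :=
  Fintype.linearCombination ℂ (fun f => monoLow N q c h f * φ)

lemma spinMap_apply (h : n ≤ N) (v : (Fin n → Bool) → ℂ) :
    spinMap h φ v = ∑ f, v f • (monoLow N q c h f * φ) :=
  Fintype.linearCombination_apply _ _ _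

lemma spinMap_spinGen (hN : 2 * n ≤ N) (hN' : N ≤ 2 * n + 1) (h : n ≤ N)
    {μ : ℂ} (hφ : ∀ k : Fin N, (k : ℕ) < n → γ N q c (dual k) * φ = 0)
    (hφm : ∀ m : Fin N, (m : ℕ) = n → 2 * n + 1 = N → γ N q c m * φ = μ • φ)
    (j : Fin N) (v : (Fin n → Bool) → ℂ) :
    spinMap h φ (spinGen n N q c μ j v) = γ N q c j * spinMap h φ v := by
  have hj := j.2
  simp only [spinMap_apply, mul_sum, mul_smul_comm]
  by_cases hjn : (j : ℕ) < n
  · obtain ⟨i, rfl⟩ : ∃ i : Fin n, j = Fin.castLE h i := ⟨⟨j, hjn⟩, rfl⟩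
    rw [spinGen_low μ hjn, ← sum_update_not i]
    refine sum_congr rfl fun f _ => ?_
    rw [← mul_assoc, γ_low_mul_monoLow hN h, creation_apply]
    simp only [Fin.val_castLE, Fin.eta, update_self, weight_update_of_le _ _ _ _ le_rfl]
    cases hf : f i
    · rw [update_idem, ← hf, update_eq_self]
      simp [hf, smul_smul, mul_comm]
    · simp
  · by_cases hjn' : N - 1 - j < n
    · obtain ⟨i, rfl⟩ : ∃ i : Fin n, j = dual (Fin.castLE h i) :=
        ⟨⟨N - 1 - j, hjn'⟩, (dual_dual j).symm⟩
      rw [spinGen_dual hN μ (j := Fin.castLE h i) i.2, ← sum_update_not i]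
      refine sum_congr rfl fun f _ => ?_
      rw [γ_dual_mul_monoLow_mul hN h hφ, LinearMap.smul_apply, Pi.smul_apply,
        annihilation_apply]
      simp only [Fin.val_castLE, Fin.eta, update_self, weight_update_of_le _ _ _ _ le_rfl]
      cases hf : f i
      · simp
      · rw [update_idem, ← hf, update_eq_self]
        simp [hf, smul_smul]
        ring_nf
    · rw [spinGen_middle μ hjn hjn']
      refine sum_congr rfl fun f _ => ?_
      rw [γ_middle_mul_monoLow_mul h (by omega) (by omega) (hφm j (by omega) (by omega)),
        LinearMap.smul_apply, Pi.smul_apply, twist_apply, smul_smul, smul_eq_mul]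
      ring_nf

lemma spinMap_single (h : n ≤ N) :
    spinMap h φ (Pi.single (fun _ => false) 1) = φ := by
  rw [spinMap, Fintype.linearCombination_apply_single, one_smul, monoLow]
  simp

lemma spinMap_rep (h : n ≤ N) {μ : ℂ}
    (hgen : ∀ (j : Fin N) (v : (Fin n → Bool) → ℂ),
      spinMap h φ (spinGen n N q c μ j v) = γ N q c j * spinMap h φ v)
    (ρ : Cl N q c →ₐ[ℂ] Module.End ℂ ((Fin n → Bool) → ℂ))
    (hρ : ∀ j, ρ (γ N q c j) = spinGen n N q c μ j) (a : Cl N q c) (v : (Fin n → Bool) → ℂ) :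
    spinMap h φ (ρ a v) = a * spinMap h φ v := by
  obtain ⟨b, rfl⟩ := RingQuot.mkAlgHom_surjective ℂ (Rel N q c) a
  induction b using FreeAlgebra.induction generalizing v with
  | grade0 r =>
    rw [AlgHom.commutes, AlgHom.commutes, Module.algebraMap_end_apply, map_smul, Algebra.smul_def]
  | grade1 j =>
    have := hρ j
    rw [γ, gen] at this
    rw [this, hgen]
    rfl
  | mul x y hx hy => rw [map_mul, map_mul, Module.End.mul_apply, hx, hy, mul_assoc]
  | add x y hx hy => rw [map_add, map_add, LinearMap.add_apply, map_add, hx, hy, add_mul]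

/-- A nonzero vector killed by the `γ_{i'}`, `i ≤ n`, and an eigenvector of the middle generator,
generates a minimal left ideal with a basis of ordered monomials. -/
theorem minimal_of_vacuum (hN : 2 * n ≤ N) (hN' : N ≤ 2 * n + 1) (h : n ≤ N)
    (hq : q ≠ 0) (hqq : q + q⁻¹ ≠ 0) (hc : c ≠ 0) {μ : ℂ} (hμ : μ ^ 2 = c ^ 2)
    (hφ : ∀ k : Fin N, (k : ℕ) < n → γ N q c (dual k) * φ = 0)
    (hφm : ∀ m : Fin N, (m : ℕ) = n → 2 * n + 1 = N → γ N q c m * φ = μ • φ)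
    (hφ0 : φ ≠ 0) :
    LinearIndependent ℂ (fun f : Fin n → Bool => monoLow N q c h f * φ) ∧
    Submodule.span ℂ (Set.range (fun f : Fin n → Bool => monoLow N q c h f * φ)) =
      (Ideal.span {φ}).restrictScalars ℂ ∧
    Ideal.span {φ} ≠ ⊥ ∧
    (∀ J : Ideal (Cl N q c), J ≤ Ideal.span {φ} → J = ⊥ ∨ J = Ideal.span {φ}) := by
  have hgen := spinMap_spinGen hN hN' h hφ hφm
  obtain ⟨ρ, hρ⟩ := exists_spinRep (n := n) hN hN' hq hqq hμ
  have hrep := spinMap_rep h hgen ρ hρ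
  have hvac : ∀ J : Ideal (Cl N q c),
      (J.restrictScalars ℂ).comap (spinMap h φ) ≠ ⊥ → φ ∈ J := by
    intro J hJ
    have := single_mem_of_annihilation_mem (s := -q ^ 2) (by simp [hq])
      ((J.restrictScalars ℂ).comap (spinMap h φ)) (fun i v hv => ?_) hJ
    · simpa [spinMap_single] using this
    · have hi : ((Fin.castLE h i : Fin N) : ℕ) < n := i.2
      have h1 := hgen (dual (Fin.castLE h i)) v
      rw [spinGen_dual hN μ hi, LinearMap.smul_apply, map_smul] at h1
      have h2 : spinMap h φ (annihilation (-q ^ 2) i v) = (pairConst N q c i)⁻¹ •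
          (γ N q c (dual (Fin.castLE h i)) * spinMap h φ v) := by
        rw [← h1]
        exact (inv_smul_smul₀ (pairConst_ne_zero hq hqq hc _) _).symm
      change spinMap h φ _ ∈ J
      rw [h2, Algebra.smul_def]
      exact J.mul_mem_left _ (J.mul_mem_left _ hv)
  have hrange : LinearMap.range (spinMap h φ) = (Ideal.span {φ}).restrictScalars ℂ := by
    ext x
    simp only [LinearMap.mem_range, Submodule.restrictScalars_mem, Ideal.mem_span_singleton']
    constructor
    · rintro ⟨v, rfl⟩
      refine ⟨∑ f, v f • monoLow N q c h f, ?_⟩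
      rw [spinMap_apply, sum_mul]
      simp
    · rintro ⟨a, rfl⟩
      exact ⟨ρ a (Pi.single (fun _ => false) 1), by rw [hrep, spinMap_single]⟩
  refine ⟨?_, ?_, ?_, ?_⟩
  · rw [linearIndependent_iff_injective_fintypeLinearCombination]
    change Function.Injective (spinMap h φ)
    rw [← LinearMap.ker_eq_bot]
    by_contra hker
    have hbot : φ ∈ (⊥ : Ideal (Cl N q c)) := hvac ⊥ fun h0 => hker (by rw [← h0]; rfl)
    exact hφ0 ((Submodule.mem_bot _).1 hbot)
  · rw [← hrange, spinMap, Fintype.range_linearCombination]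
  · simpa [Ideal.span_singleton_eq_bot] using hφ0
  · intro J hJ
    refine or_iff_not_imp_left.2 fun hJ0 => le_antisymm hJ ?_
    rw [Ideal.span_singleton_le_iff_mem]
    obtain ⟨x, hx, hx0⟩ := J.exists_mem_ne_zero_of_ne_bot hJ0
    obtain ⟨v, rfl⟩ : x ∈ LinearMap.range (spinMap h φ) := hrange ▸ hJ hx
    refine hvac J fun h0 => hx0 ?_
    have : v ∈ (J.restrictScalars ℂ).comap (spinMap h φ) := hx
    rw [h0, Submodule.mem_bot] at this
    rw [this, map_zero]

/-- Products of distinct annihilation operators are nonzero on the constant vector. -/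
lemma list_prod_spinGen_apply_ne_zero (hN : 2 * n ≤ N) (hq : q ≠ 0) (hqq : q + q⁻¹ ≠ 0)
    (hc : c ≠ 0) (μ : ℂ) (l : List (Fin N)) (hl : l.Nodup) (hln : ∀ j ∈ l, N - 1 - j < n)
    (f : Fin n → Bool) (hf : ∀ j ∈ l, ∀ i : Fin n, (i : ℕ) + j + 1 = N → f i = false) :
    (l.map (spinGen n N q c μ)).prod (fun _ => 1) f ≠ 0 := by
  induction l generalizing f with
  | nil => simp
  | cons j l ih =>
    have hj : N - 1 - j < n := hln j (by simp)
    have hjN := j.2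
    rw [List.nodup_cons] at hl
    rw [List.map_cons, List.prod_cons, spinGen_high hN μ hj, Module.End.mul_apply,
      LinearMap.smul_apply, Pi.smul_apply, annihilation_apply,
      hf j (by simp) ⟨N - 1 - j, hj⟩ (by simp; omega), if_neg (by simp)]
    refine mul_ne_zero (pairConst_ne_zero hq hqq hc _)
      (mul_ne_zero (weight_ne_zero (by simp [hq]) _ _) (ih hl.2
        (fun k hk => hln k (List.mem_cons_of_mem _ hk)) _ fun k hk i hi => ?_))
    rw [update_of_ne]
    · exact hf k (List.mem_cons_of_mem _ hk) i hi
    · rintro rfl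
      refine hl.1 ?_
      have : j = k := by ext; simp at hi; omega
      rwa [this]

lemma rep_prodFrom_apply_ne_zero (hN : 2 * n ≤ N) (hq : q ≠ 0) (hqq : q + q⁻¹ ≠ 0)
    (hc : c ≠ 0) {μ : ℂ} (ρ : Cl N q c →ₐ[ℂ] Module.End ℂ ((Fin n → Bool) → ℂ))
    (hρ : ∀ j, ρ (γ N q c j) = spinGen n N q c μ j) {m : ℕ} (hm : N ≤ n + m) :
    ρ (prodFrom N q c m) (fun _ => 1) (fun _ => false) ≠ 0 := by
  rw [prodFrom, map_list_prod, List.map_map, show ρ ∘ γ N q c = spinGen n N q c μ from funext hρ]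
  refine list_prod_spinGen_apply_ne_zero hN hq hqq hc μ _
    ((List.nodup_finRange N).sublist (List.drop_sublist _ _)) (fun j hj => ?_) _ (by simp)
  have := mem_drop_finRange.1 hj
  have := j.2
  omega

end Vacuum

/-- the left ideal `I_L^ν = Cl_N(q,c)·φ_N^ν` is minimal, and the elements
`γ_1^{i_1}⋯γ_n^{i_n} φ_N^ν` (`i_j ∈ {0,1}`) form a vector space basis of it. -/
theorem left_ideal_minimal_and_basis (n ε : ℕ) (hn : 1 ≤ n) (hε : ε ≤ 1)
    (N : ℕ) (hNdef : N = 2 * n + ε) (hN : 3 ≤ N) (q c : ℂ)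
    (hq : q ≠ 0) (hqr : ∀ m : ℕ, 0 < m → q ^ m ≠ 1) (hc : c ≠ 0)
    (φ : Cl N q c)
    (hφ : (ε = 0 ∧ φ = prodFrom N q c n) ∨
          (ε = 1 ∧ ∃ ν : ℂ, (ν = 1 ∨ ν = -1) ∧
            φ = (algebraMap ℂ (Cl N q c) (ν * c) + γ N q c ⟨n, by omega⟩) *
              prodFrom N q c (n + 1))) :
    LinearIndependent ℂ
      (fun f : Fin n → Bool => monoLow N q c (by omega) f * φ) ∧
    Submodule.span ℂ
        (Set.range (fun f : Fin n → Bool => monoLow N q c (by omega) f * φ)) =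
      (Ideal.span {φ}).restrictScalars ℂ ∧
    Ideal.span {φ} ≠ ⊥ ∧
    (∀ J : Ideal (Cl N q c), J ≤ Ideal.span {φ} → J = ⊥ ∨ J = Ideal.span {φ}) := by
  have hqq : q + q⁻¹ ≠ 0 := add_inv_ne_zero_of_pow_four_ne_one hq (hqr 4 (by norm_num))
  rcases hφ with ⟨rfl, rfl⟩ | ⟨rfl, ν, hν, rfl⟩
  · obtain ⟨ρ, hρ⟩ := exists_spinRep (n := n) (N := N) (by omega) (by omega) hq hqq (rfl : c ^ 2 = _)
    refine minimal_of_vacuum (μ := c) (by omega) (by omega) _ hq hqq hc rfl (fun k hk => ?_)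
      (fun m hm hmN => by omega) fun h0 => ?_
    · exact γ_mul_prodFrom_eq_zero hq (by omega) (by simp only [dual]; omega)
    · refine rep_prodFrom_apply_ne_zero (by omega) hq hqq hc ρ hρ (m := n) (by omega) ?_
      rw [h0, map_zero]
      rfl
  · have hμ : (ν * c) ^ 2 = c ^ 2 := by rcases hν with rfl | rfl <;> ring
    have hν0 : ν ≠ 0 := by rcases hν with rfl | rfl <;> norm_num
    obtain ⟨ρ, hρ⟩ := exists_spinRep (n := n) (N := N) (by omega) (by omega) hq hqq hμ
    have hdual : ∀ k : Fin N, (k : ℕ) < n →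
        γ N q c (dual k) * prodFrom N q c (n + 1) = 0 := fun k hk =>
      γ_mul_prodFrom_eq_zero hq (by omega) (by simp only [dual]; omega)
    refine minimal_of_vacuum (μ := ν * c) (by omega) (by omega) _ hq hqq hc hμ (fun k hk => ?_)
      (fun m hm hmN => ?_) fun h0 => ?_
    · rw [← mul_assoc, mul_add, ← Algebra.commutes, γ_swap, add_mul, mul_assoc, hdual k hk,
        smul_mul_assoc, mul_assoc, hdual k hk]
      · simp
      · rw [Fin.lt_def]; simp only [dual]; omega
      · simp only [dual]; omega
    · rw [show m = ⟨n, by omega⟩ from Fin.ext hm, ← mul_assoc, mul_add, γ_middle (by simp only; omega), ← Algebra.commutes, add_mul,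
        add_mul, smul_mul_assoc, sum_mul, sum_eq_zero, ← Algebra.smul_def, add_mul,
        ← hμ, Algebra.algebraMap_eq_smul_one, Algebra.algebraMap_eq_smul_one]
      · simp only [smul_mul_assoc, one_mul, smul_zero, zero_add, smul_add, smul_smul]
        rw [add_comm, pow_two]
      · intro k hk
        rw [smul_mul_assoc, mul_assoc, hdual k (by simpa [Fin.lt_def] using hk), mul_zero,
          smul_zero]
    · have hne := rep_prodFrom_apply_ne_zero (by omega) hq hqq hc ρ hρ (m := n + 1) (by omega)
      have h1 : ρ ((algebraMap ℂ (Cl N q c) (ν * c) + γ N q c ⟨n, by omega⟩) *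
          prodFrom N q c (n + 1)) (fun _ => 1) (fun _ => false) = 0 := by
        rw [h0, map_zero]
        rfl
      have hw : weight (-q ^ 2) (fun _ : Fin n => false) n = 1 := by simp [weight]
      rw [map_mul, map_add, AlgHom.commutes, hρ, spinGen_middle _ (by simp) (by simp only; omega),
        Module.End.mul_apply, LinearMap.add_apply, Pi.add_apply, LinearMap.smul_apply,
        Module.algebraMap_end_apply, Pi.smul_apply, Pi.smul_apply, twist_apply, hw, one_mul,
        smul_eq_mul, ← two_mul] at h1
      exact mul_ne_zero two_ne_zero (mul_ne_zero (mul_ne_zero hν0 hc) hne) h1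

end FRT
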